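/- Let 0 < s ≤ 1, 1 ≤ p < ∞, and d ≥ 2 be such that 1 < sp < d. Then there exists a constant C > 0 depending only on s, p, d, such that for every radial g ∈ C¹_{c,rad}(ℝ^d) and every x ∈ ℝ^d \ {0}: |g(x)| ≤ C |x|^{−(d−sp)/p} ‖g‖_{Ẇ^{s,p}(ℝ^d)}. -/

import Mathlib

open MeasureTheory Real

/-- Homogeneous (fractional) Sobolev seminorm `‖g‖_{Ẇ^{s,p}(ℝ^d)}`:
for `0 < s < 1` the Gagliardo seminorm, for `s = 1` the `L^p` norm of the gradient. -/
noncomputable def sobolevSemi (d : ℕ) (s p : ℝ) (g : EuclideanSpace ℝ (Fin d) → ℝ) : ℝ :=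
  if s = 1 then (∫ x, ‖fderiv ℝ g x‖ ^ p) ^ (1 / p)
  else if s = 0 then (∫ x, |g x| ^ p) ^ (1 / p)
  else (∫ x, ∫ y, |g x - g y| ^ p / ‖x - y‖ ^ ((d : ℝ) + s * p)) ^ (1 / p)

theorem le_two_mul_of_absorb {ι : Type*} {φ : ι → ℝ} {A : ℝ} (hb : BddAbove (Set.range φ))
    (h : ∀ H, (∀ i, φ i ≤ H) → ∀ i, φ i ≤ H / 2 + A) (i : ι) : φ i ≤ 2 * A := by
  have : Nonempty ι := ⟨i⟩
  have h1 : ⨆ j, φ j ≤ (⨆ j, φ j) / 2 + A := ciSup_le (h _ fun j => le_ciSup hb j)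
  linarith [le_ciSup hb i]

/-- A radial majorant of the Gagliardo integrand of a bounded Lipschitz function. -/
noncomputable def gagliardoMajorant (a b r : ℝ) : ℝ := if r ≤ 1 then r ^ a else r ^ b

theorem gagliardoMajorant_nonneg (a b : ℝ) {r : ℝ} (hr : 0 ≤ r) : 0 ≤ gagliardoMajorant a b r := by
  unfold gagliardoMajorant
  split_ifs <;> positivity

theorem integrable_gagliardoMajorant_norm {d : ℕ} (hd : d ≠ 0) {a b : ℝ} (ha : -(d : ℝ) < a)
    (hb : b < -(d : ℝ)) :
    Integrable fun x : EuclideanSpace ℝ (Fin d) => gagliardoMajorant a b ‖x‖ := by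
  have : Nonempty (Fin d) := ⟨⟨0, Nat.pos_of_ne_zero hd⟩⟩
  have hcast : ((d - 1 : ℕ) : ℝ) = d - 1 := by
    rw [Nat.cast_sub (Nat.one_le_iff_ne_zero.2 hd)]; simp
  have hpow : ∀ c r : ℝ, 0 < r → r ^ (d - 1) * r ^ c = r ^ ((d : ℝ) - 1 + c) := by
    intro c r hr
    rw [rpow_add hr, ← hcast, rpow_natCast]
  rw [integrable_fun_norm_addHaar volume (f := gagliardoMajorant a b), finrank_euclideanSpace_fin,
    ← Set.Ioc_union_Ioi_eq_Ioi zero_le_one]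
  refine IntegrableOn.union ?_ ?_
  · have h := (intervalIntegral.intervalIntegrable_rpow' (a := 0) (b := 1)
      (r := (d : ℝ) - 1 + a) (by linarith)).1
    refine h.congr_fun (fun r hr => ?_) measurableSet_Ioc
    simp only [gagliardoMajorant, if_pos hr.2, smul_eq_mul, hpow a r hr.1]
  · have h := integrableOn_Ioi_rpow_of_lt (a := (d : ℝ) - 1 + b) (by linarith) zero_lt_one
    refine h.congr_fun (fun r hr => ?_) measurableSet_Ioi
    have hr : 1 < r := hr
    simp only [gagliardoMajorant, if_neg (not_le.2 hr), smul_eq_mul,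
      hpow b r (zero_lt_one.trans hr)]

theorem exists_gagliardo_le_majorant {d : ℕ} {g : EuclideanSpace ℝ (Fin d) → ℝ}
    (hg : ContDiff ℝ 1 g) (hc : HasCompactSupport g) {p : ℝ} (hp : 1 ≤ p) (q : ℝ) :
    ∃ M : ℝ, 0 ≤ M ∧ ∀ x y, |g x - g y| ^ p / ‖x - y‖ ^ q ≤
      M * gagliardoMajorant (p - q) (-q) ‖x - y‖ := by
  obtain ⟨L, hL⟩ := hg.lipschitzWith_of_hasCompactSupport hc one_ne_zero
  obtain ⟨B, hB⟩ := hc.exists_bound_of_continuous hg.continuous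
  have hp0 : 0 < p := by linarith
  have hB0 : 0 ≤ B := (norm_nonneg _).trans (hB 0)
  refine ⟨L ^ p + (2 * B) ^ p, by positivity, fun x y => ?_⟩
  have h1 : |g x - g y| ≤ L * ‖x - y‖ := by
    simpa [Real.dist_eq, dist_eq_norm] using hL.dist_le_mul x y
  have h2 : |g x - g y| ≤ 2 * B := by
    have := abs_sub (g x) (g y)
    have hx := hB x
    have hy := hB y
    simp only [Real.norm_eq_abs] at hx hy
    linarith
  rcases eq_or_ne x y with rfl | hxy
  · have := gagliardoMajorant_nonneg (p - q) (-q) (norm_nonneg (x - x))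
    simp only [sub_self, abs_zero, zero_rpow hp0.ne', zero_div] at this ⊢
    positivity
  have hr : 0 < ‖x - y‖ := norm_pos_iff.2 (sub_ne_zero.2 hxy)
  rw [div_eq_mul_inv, ← rpow_neg hr.le]
  unfold gagliardoMajorant
  split_ifs with h
  · calc |g x - g y| ^ p * ‖x - y‖ ^ (-q) ≤ (L * ‖x - y‖) ^ p * ‖x - y‖ ^ (-q) := by gcongr
      _ = L ^ p * ‖x - y‖ ^ (p - q) := by
        rw [mul_rpow (by positivity) hr.le, mul_assoc, ← rpow_add hr, ← sub_eq_add_neg]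
      _ ≤ _ := by
        gcongr
        exact le_add_of_nonneg_right (by positivity)
  · calc |g x - g y| ^ p * ‖x - y‖ ^ (-q) ≤ (2 * B) ^ p * ‖x - y‖ ^ (-q) := by gcongr
      _ ≤ _ := by
        gcongr
        exact le_add_of_nonneg_left (by positivity)

theorem integrable_gagliardo {d : ℕ} (hd : d ≠ 0) {g : EuclideanSpace ℝ (Fin d) → ℝ}
    (hg : ContDiff ℝ 1 g) (hc : HasCompactSupport g) {p q : ℝ} (hp : 1 ≤ p)
    (hq : (d : ℝ) < q) (hqp : q < d + p) :
    Integrable fun z : EuclideanSpace ℝ (Fin d) × EuclideanSpace ℝ (Fin d) =>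
      |g z.1 - g z.2| ^ p / ‖z.1 - z.2‖ ^ q := by
  have hp0 : 0 < p := by linarith
  obtain ⟨M, hM0, hM⟩ := exists_gagliardo_le_majorant hg hc hp q
  have hK := integrable_gagliardoMajorant_norm hd (a := p - q) (b := -q) (by linarith) (by linarith)
  have hI : Integrable ((tsupport g).indicator fun _ => (1 : ℝ)) :=
    (integrable_indicator_iff hc.measurableSet).2 (integrableOn_const hc.measure_lt_top.ne)
  have h1 := hI.convolution_integrand (ContinuousLinearMap.mul ℝ ℝ) hK
  have h2 := h1.swap
  have hm : Measurable g := hg.continuous.measurable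
  refine ((h1.add h2).const_mul M).mono'
     (Measurable.aestronglyMeasurable (by fun_prop)) (.of_forall fun z => ?_)
  have hk := gagliardoMajorant_nonneg (p - q) (-q) (norm_nonneg (z.1 - z.2))
  simp only [Pi.add_apply, Function.comp_apply, Prod.fst_swap, Prod.snd_swap,
    ContinuousLinearMap.mul_apply', norm_sub_rev z.2 z.1]
  have hind : ∀ y, 0 ≤ (tsupport g).indicator (fun _ => (1 : ℝ)) y :=
    Set.indicator_nonneg fun _ _ => zero_le_one
  have hi1 := mul_nonneg (hind z.1) hk
  have hi2 := mul_nonneg (hind z.2) hk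
  rw [Real.norm_of_nonneg (by positivity)]
  by_cases hx : z.1 ∈ tsupport g
  · refine (hM _ _).trans (mul_le_mul_of_nonneg_left ?_ hM0)
    rw [Set.indicator_of_mem hx, one_mul]
    linarith
  by_cases hy : z.2 ∈ tsupport g
  · refine (hM _ _).trans (mul_le_mul_of_nonneg_left ?_ hM0)
    rw [Set.indicator_of_mem hy, one_mul]
    linarith
  · simp [image_eq_zero_of_notMem_tsupport hx, image_eq_zero_of_notMem_tsupport hy, hx, hy,
      zero_rpow hp0.ne']

theorem measureReal_annulus_ge {d : ℕ} (hd : d ≠ 0) {ρ h : ℝ} (hρ : 0 ≤ ρ) (hh : 0 ≤ h) :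
    ρ ^ (d - 1) * h * volume.real (Metric.ball (0 : EuclideanSpace ℝ (Fin d)) 1) ≤
      volume.real (Metric.closedBall (0 : EuclideanSpace ℝ (Fin d)) (ρ + h) \
        Metric.closedBall 0 ρ) := by
  obtain ⟨n, rfl⟩ := Nat.exists_eq_succ_of_ne_zero hd
  rw [measureReal_sdiff (Metric.closedBall_subset_closedBall (by linarith))
    Metric.isClosed_closedBall.measurableSet measure_closedBall_lt_top.ne,
    Measure.addHaar_real_closedBall _ _ (by positivity), Measure.addHaar_real_closedBall _ _ hρ,
    finrank_euclideanSpace_fin, ← sub_mul]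
  refine mul_le_mul_of_nonneg_right ?_ measureReal_nonneg
  have : ρ ^ n ≤ (ρ + h) ^ n := by gcongr; linarith
  simp only [Nat.succ_eq_add_one, Nat.add_sub_cancel, pow_succ]
  nlinarith [mul_le_mul_of_nonneg_right this (add_nonneg hρ hh)]

theorem closedBall_radial_subset {E : Type*} [NormedAddCommGroup E] [NormedSpace ℝ E] {y z : E}
    (hy : y ≠ 0) {r h : ℝ} (hr : 0 ≤ r) (hh : 0 ≤ h)
    (hz : z ∈ Metric.closedBall (((r + h / 2) / ‖y‖) • y) (h / 2)) :
    ‖z‖ ∈ Set.Icc r (r + h) ∧ ‖y - z‖ ≤ |r + h / 2 - ‖y‖| + h / 2 := by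
  have hy0 : 0 < ‖y‖ := norm_pos_iff.2 hy
  set c : E := ((r + h / 2) / ‖y‖) • y with hc
  have hcn : ‖c‖ = r + h / 2 := by
    rw [hc, norm_smul, norm_div, norm_norm, div_mul_cancel₀ _ hy0.ne',
      Real.norm_of_nonneg (by positivity)]
  have hcy : ‖c - y‖ = |r + h / 2 - ‖y‖| := by
    have : c - y = ((r + h / 2 - ‖y‖) / ‖y‖) • y := by
      rw [hc, sub_div, div_self hy0.ne', sub_smul, one_smul]
    rw [this, norm_smul, norm_div, norm_norm, div_mul_cancel₀ _ hy0.ne', Real.norm_eq_abs]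
  rw [Metric.mem_closedBall, dist_eq_norm] at hz
  have h1 := abs_le.1 ((abs_norm_sub_norm_le z c).trans hz)
  refine ⟨⟨by linarith [h1.1], by linarith [h1.2]⟩, ?_⟩
  have h2 : ‖y - z‖ ≤ ‖c - y‖ + ‖z - c‖ := by
    rw [norm_sub_rev c y, norm_sub_rev z c]
    simpa using norm_sub_le_norm_sub_add_norm_sub y c z
  rw [hcy] at h2
  linarith

theorem gagliardo_ge_of_windows {d : ℕ} (hd : d ≠ 0) {g : EuclideanSpace ℝ (Fin d) → ℝ}
    (hrad : ∀ x y : EuclideanSpace ℝ (Fin d), ‖x‖ = ‖y‖ → g x = g y)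
    (hg : ContDiff ℝ 1 g) (hc : HasCompactSupport g) {p q : ℝ} (hp : 1 ≤ p)
    (hq : (d : ℝ) < q) (hqp : q < d + p) {e : EuclideanSpace ℝ (Fin d)} (he : ‖e‖ = 1)
    {ρ δ h m : ℝ} (hρ : 0 < ρ) (hh : 0 < h) (hδ : h < δ) (hm : 0 ≤ m)
    (hwin : ∀ t ∈ Set.Icc ρ (ρ + h), ∀ t' ∈ Set.Icc (ρ + δ) (ρ + δ + h),
      m ≤ |g (t • e) - g (t' • e)|) :
    m ^ p / (2 * δ) ^ q *
        ((h / 2) ^ d * volume.real (Metric.ball (0 : EuclideanSpace ℝ (Fin d)) 1)) *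
        (ρ ^ (d - 1) * h * volume.real (Metric.ball (0 : EuclideanSpace ℝ (Fin d)) 1)) ≤
      ∫ x, ∫ y, |g x - g y| ^ p / ‖x - y‖ ^ q := by
  have hF := integrable_gagliardo hd hg hc hp hq hqp
  obtain ⟨M, hM0, hM⟩ := exists_gagliardo_le_majorant hg hc hp q
  have hK := integrable_gagliardoMajorant_norm hd (a := p - q) (b := -q) (by linarith) (by linarith)
  have hgm : Measurable g := hg.continuous.measurable
  have hslice (x : EuclideanSpace ℝ (Fin d)) :
      Integrable fun y => |g x - g y| ^ p / ‖x - y‖ ^ q := by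
    refine ((hK.comp_sub_left x).const_mul M).mono' (Measurable.aestronglyMeasurable (by fun_prop))
      (.of_forall fun y => ?_)
    rw [Real.norm_of_nonneg (by positivity)]
    exact hM x y
  have hgr (y : EuclideanSpace ℝ (Fin d)) : g y = g (‖y‖ • e) :=
    hrad _ _ (by rw [norm_smul, he, mul_one, norm_norm])
  have hinner : ∀ x ∈ Metric.closedBall (0 : EuclideanSpace ℝ (Fin d)) (ρ + h) \
      Metric.closedBall 0 ρ, m ^ p / (2 * δ) ^ q *
        ((h / 2) ^ d * volume.real (Metric.ball (0 : EuclideanSpace ℝ (Fin d)) 1)) ≤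
      ∫ y, |g x - g y| ^ p / ‖x - y‖ ^ q := by
    intro x hx
    have hx1 : ‖x‖ ≤ ρ + h := by simpa using hx.1
    have hx2 : ρ < ‖x‖ := by simpa using hx.2
    have hx0 : x ≠ 0 := norm_pos_iff.1 (hρ.trans hx2)
    set c := ((ρ + δ + h / 2) / ‖x‖) • x
    have hvol : volume.real (Metric.closedBall c (h / 2)) =
        (h / 2) ^ d * volume.real (Metric.ball (0 : EuclideanSpace ℝ (Fin d)) 1) := by
      rw [Measure.addHaar_real_closedBall _ _ (by positivity), finrank_euclideanSpace_fin]
    rw [← hvol]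
    refine (setIntegral_ge_of_const_le_real Metric.isClosed_closedBall.measurableSet
      measure_closedBall_lt_top.ne (fun y hy => ?_) (hslice x).integrableOn).trans
      (setIntegral_le_integral (hslice x) (.of_forall fun y => by positivity))
    obtain ⟨hy1, hy2⟩ := closedBall_radial_subset hx0 (by linarith) hh.le hy
    have hxy : 0 < ‖x - y‖ := by
      have := abs_le.1 (abs_norm_sub_norm_le x y)
      linarith [this.1, hy1.1]
    have hxy' : ‖x - y‖ ≤ 2 * δ := by
      rw [abs_of_nonneg (by linarith)] at hy2
      linarith
    have hmg : m ≤ |g x - g y| := by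
      rw [hgr x, hgr y]
      exact hwin _ ⟨hx2.le, hx1⟩ _ hy1
    have : 0 < q := by
      have : (0 : ℝ) ≤ d := d.cast_nonneg
      linarith
    gcongr
  have hI := hF.integral_prod_left
  have hω : 0 ≤ m ^ p / (2 * δ) ^ q *
      ((h / 2) ^ d * volume.real (Metric.ball (0 : EuclideanSpace ℝ (Fin d)) 1)) := by
    have : 0 < δ := hh.trans hδ
    positivity
  calc _ ≤ _ := mul_le_mul_of_nonneg_left (measureReal_annulus_ge hd hρ.le hh.le) hω
    _ ≤ _ := setIntegral_ge_of_const_le_real (Metric.isClosed_closedBall.measurableSet.diff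
        Metric.isClosed_closedBall.measurableSet)
        (measure_ne_top_of_subset Set.sdiff_subset measure_closedBall_lt_top.ne) hinner
        hI.integrableOn
    _ ≤ _ := setIntegral_le_integral hI (.of_forall fun x => integral_nonneg fun y => by positivity)

theorem exists_holder_bound_along_ray {d : ℕ} {g : EuclideanSpace ℝ (Fin d) → ℝ}
    (hg : ContDiff ℝ 1 g) (hc : HasCompactSupport g) {e : EuclideanSpace ℝ (Fin d)} (he : ‖e‖ = 1)
    {α : ℝ} (hα0 : 0 ≤ α) (hα1 : α ≤ 1) :
    ∃ M, ∀ t t' : ℝ, t < t' → |g (t • e) - g (t' • e)| ≤ M * (t' - t) ^ α := by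
  obtain ⟨L, hL⟩ := hg.lipschitzWith_of_hasCompactSupport hc one_ne_zero
  obtain ⟨B, hB⟩ := hc.exists_bound_of_continuous hg.continuous
  have hB0 : 0 ≤ B := (norm_nonneg _).trans (hB 0)
  refine ⟨L + 2 * B, fun t t' ht => ?_⟩
  have hr : 0 < t' - t := sub_pos.2 ht
  have hpos : 0 ≤ (t' - t) ^ α := by positivity
  have hL0 : (0 : ℝ) ≤ L := L.2
  rcases le_total (t' - t) 1 with h | h
  · have h1 := hL.dist_le_mul (t • e) (t' • e)
    rw [Real.dist_eq, dist_eq_norm, ← sub_smul, norm_smul, he, mul_one, Real.norm_eq_abs,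
      abs_sub_comm, abs_sub_comm t, abs_of_pos hr, abs_sub_comm] at h1
    have h2 : t' - t ≤ (t' - t) ^ α := by
      simpa using rpow_le_rpow_of_exponent_ge hr h hα1
    nlinarith [mul_le_mul_of_nonneg_left h2 hL0, mul_nonneg hB0 hpos]
  · have h1 := abs_sub (g (t • e)) (g (t' • e))
    have hx := hB (t • e)
    have hy := hB (t' • e)
    simp only [Real.norm_eq_abs] at hx hy
    have h2 : 1 ≤ (t' - t) ^ α := one_le_rpow h hα0
    nlinarith [mul_le_mul_of_nonneg_left h2 hB0, mul_nonneg hL0 hpos]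

theorem sobolevSemi_nonneg (d : ℕ) (s p : ℝ) (g : EuclideanSpace ℝ (Fin d) → ℝ) :
    0 ≤ sobolevSemi d s p g := by
  unfold sobolevSemi
  split_ifs
  · exact rpow_nonneg (integral_nonneg fun x => by positivity) _
  · exact rpow_nonneg (integral_nonneg fun x => by positivity) _
  · exact rpow_nonneg (integral_nonneg fun x => integral_nonneg fun y => by positivity) _

theorem exists_window_gap_const {d : ℕ} (hd : d ≠ 0) {s p ε : ℝ} (hs0 : 0 < s) (hs1 : s < 1)
    (hp : 1 ≤ p) (hε0 : 0 < ε) (hε1 : ε < 1) :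
    ∃ C > 0, ∀ g : EuclideanSpace ℝ (Fin d) → ℝ,
      (∀ x y : EuclideanSpace ℝ (Fin d), ‖x‖ = ‖y‖ → g x = g y) →
      ContDiff ℝ 1 g → HasCompactSupport g → ∀ e : EuclideanSpace ℝ (Fin d), ‖e‖ = 1 →
      ∀ R ρ δ m : ℝ, 0 < R → R ≤ ρ → 0 < δ → 0 ≤ m →
      (∀ t ∈ Set.Icc ρ (ρ + ε * δ), ∀ t' ∈ Set.Icc (ρ + δ) (ρ + δ + ε * δ),
        m ≤ |g (t • e) - g (t' • e)|) →
      m ≤ C * R ^ (-(((d : ℝ) - 1) / p)) * δ ^ (s - 1 / p) * sobolevSemi d s p g := by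
  have hp0 : 0 < p := by linarith
  have hd1 : (1 : ℝ) ≤ d := by exact_mod_cast Nat.one_le_iff_ne_zero.2 hd
  obtain ⟨ω, hω⟩ : ∃ ω, volume.real (Metric.ball (0 : EuclideanSpace ℝ (Fin d)) 1) = ω := ⟨_, rfl⟩
  have hω0 : 0 < ω := hω ▸
    ENNReal.toReal_pos (Metric.measure_ball_pos _ _ one_pos).ne' measure_ball_lt_top.ne
  obtain ⟨q, hq⟩ : ∃ q, q = (d : ℝ) + s * p := ⟨_, rfl⟩
  obtain ⟨K, hK⟩ : ∃ K, K = (2 : ℝ) ^ (-q) * ((ε / 2) ^ d * ω) * (ε * ω) := ⟨_, rfl⟩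
  have hK0 : 0 < K := by rw [hK]; positivity
  refine ⟨(K⁻¹) ^ (1 / p), by positivity, fun g hrad hg hc e he R ρ δ m hR hρR hδ0 hm0 hwin => ?_⟩
  have hρ0 : 0 < ρ := hR.trans_le hρR
  have hkey := gagliardo_ge_of_windows hd hrad hg hc hp (q := q) (by nlinarith)
    (by nlinarith) he hρ0 (mul_pos hε0 hδ0) (δ := δ) (by nlinarith) hm0 hwin
  rw [sobolevSemi, if_neg hs1.ne, if_neg hs0.ne', ← hq]
  have hG0 : 0 ≤ ∫ x, ∫ y, |g x - g y| ^ p / ‖x - y‖ ^ q :=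
    integral_nonneg fun x => integral_nonneg fun y => by positivity
  generalize ∫ x, ∫ y, |g x - g y| ^ p / ‖x - y‖ ^ q = G at hkey hG0 ⊢
  rw [hω] at hkey
  have hcast : ((d - 1 : ℕ) : ℝ) = d - 1 := by
    rw [Nat.cast_sub (Nat.one_le_iff_ne_zero.2 hd)]; simp
  have hδq : (δ : ℝ) ^ (-q) * δ ^ d * δ = δ ^ (1 - s * p) := by
    rw [← rpow_natCast, ← rpow_add hδ0, ← rpow_add_one hδ0.ne']
    congr 1
    rw [hq]; ring
  have hmp : m ^ p ≤ K⁻¹ * R ^ (-((d : ℝ) - 1)) * δ ^ (s * p - 1) * G := by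
    have h1 : K * R ^ ((d : ℝ) - 1) * δ ^ (1 - s * p) * m ^ p ≤ G := by
      calc _ ≤ K * ρ ^ ((d : ℝ) - 1) * δ ^ (1 - s * p) * m ^ p := by
            gcongr
        _ = _ := by
          rw [← hδq, ← hcast, rpow_natCast, div_eq_mul_inv (m ^ p), ← rpow_neg (by positivity),
            mul_rpow zero_le_two hδ0.le, hK, mul_div_right_comm, mul_pow]
          ring
        _ ≤ G := hkey
    have h2 : R ^ (-((d : ℝ) - 1)) = (R ^ ((d : ℝ) - 1))⁻¹ := rpow_neg hR.le _
    have h3 : δ ^ (s * p - 1) = (δ ^ (1 - s * p))⁻¹ := by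
      rw [← rpow_neg hδ0.le, neg_sub]
    rw [h2, h3, ← mul_inv, ← mul_inv, inv_mul_eq_div, le_div_iff₀ (by positivity), mul_comm]
    exact h1
  calc m = (m ^ p) ^ (1 / p) := by rw [← rpow_mul hm0, mul_one_div_cancel hp0.ne', rpow_one]
    _ ≤ (K⁻¹ * R ^ (-((d : ℝ) - 1)) * δ ^ (s * p - 1) * G) ^ (1 / p) := by gcongr
    _ = _ := by
      rw [mul_rpow (by positivity) hG0, mul_rpow (by positivity) (by positivity),
        mul_rpow (by positivity) (by positivity), ← rpow_mul hR.le, ← rpow_mul hδ0.le]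
      have e1 : -((d : ℝ) - 1) * (1 / p) = -(((d : ℝ) - 1) / p) := by ring
      have e2 : (s * p - 1) * (1 / p) = s - 1 / p := by field_simp
      rw [e1, e2]

theorem radial_holder_fractional {d : ℕ} (hd : d ≠ 0) {s p : ℝ} (hs0 : 0 < s) (hs1 : s < 1)
    (hp : 1 ≤ p) (hsp : 1 < s * p) :
    ∃ C > 0, ∀ g : EuclideanSpace ℝ (Fin d) → ℝ,
      (∀ x y : EuclideanSpace ℝ (Fin d), ‖x‖ = ‖y‖ → g x = g y) →
      ContDiff ℝ 1 g → HasCompactSupport g → ∀ e : EuclideanSpace ℝ (Fin d), ‖e‖ = 1 →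
      ∀ R > 0, ∀ t t' : ℝ, R ≤ t → t < t' → |g (t • e) - g (t' • e)| ≤
        C * R ^ (-(((d : ℝ) - 1) / p)) * (t' - t) ^ (s - 1 / p) * sobolevSemi d s p g := by
  have hp0 : 0 < p := by linarith
  set α := s - 1 / p with hα
  have hα0 : 0 < α := by
    rw [hα, sub_pos, div_lt_iff₀ hp0]
    exact hsp
  have hα1 : α ≤ 1 := by
    have : 0 < 1 / p := by positivity
    linarith
  obtain ⟨ε, hε0, hε1, hεα⟩ : ∃ ε : ℝ, 0 < ε ∧ ε < 1 ∧ ε ^ α ≤ 1 / 4 := by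
    refine ⟨(1 / 4) ^ (1 / α), by positivity,
      rpow_lt_one (by norm_num) (by norm_num) (by positivity), ?_⟩
    rw [← rpow_mul (by norm_num), one_div_mul_cancel hα0.ne', rpow_one]
  obtain ⟨C, hC, hgap⟩ := exists_window_gap_const hd hs0 hs1 hp hε0 hε1
  refine ⟨2 * C, by positivity, fun g hrad hg hc e he R hR => ?_⟩
  have hS := sobolevSemi_nonneg d s p g
  obtain ⟨A, hA⟩ : ∃ A, A = C * R ^ (-(((d : ℝ) - 1) / p)) * sobolevSemi d s p g := ⟨_, rfl⟩
  have hA0 : 0 ≤ A := by rw [hA]; positivity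
  let ι := {z : ℝ × ℝ // R ≤ z.1 ∧ z.1 < z.2}
  let φ : ι → ℝ := fun z => |g (z.1.1 • e) - g (z.1.2 • e)| / (z.1.2 - z.1.1) ^ α
  have hbdd : BddAbove (Set.range φ) := by
    obtain ⟨M, hM⟩ := exists_holder_bound_along_ray hg hc he hα0.le hα1
    refine ⟨M, ?_⟩
    rintro _ ⟨⟨z, hz1, hz2⟩, rfl⟩
    exact (div_le_iff₀ (rpow_pos_of_pos (sub_pos.2 hz2) α)).2 (hM _ _ hz2)
  have habs : ∀ H, (∀ i, φ i ≤ H) → ∀ i, φ i ≤ H / 2 + A := by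
    rintro H hH ⟨⟨ρ, ρ'⟩, hρR, hρ⟩
    simp only at hρR hρ
    have hH' : ∀ t t' : ℝ, R ≤ t → t < t' → |g (t • e) - g (t' • e)| ≤ H * (t' - t) ^ α :=
      fun t t' h1 h2 => (div_le_iff₀ (rpow_pos_of_pos (sub_pos.2 h2) α)).1 (hH ⟨⟨t, t'⟩, h1, h2⟩)
    have hH0 : 0 ≤ H := le_trans (by
      have : 0 < ρ' - ρ := sub_pos.2 hρ
      simp only [φ]
      positivity) (hH ⟨⟨ρ, ρ'⟩, hρR, hρ⟩)
    obtain ⟨δ, rfl⟩ : ∃ δ, ρ' = ρ + δ := ⟨ρ' - ρ, by ring⟩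
    have hδ0 : 0 < δ := by linarith
    have hρ0 : 0 < ρ := hR.trans_le hρR
    simp only [φ, add_sub_cancel_left]
    have hδα : 0 < δ ^ α := rpow_pos_of_pos hδ0 α
    rw [div_le_iff₀ hδα]
    set D := |g (ρ • e) - g ((ρ + δ) • e)| with hD
    set m := D - H / 2 * δ ^ α with hm
    rcases le_or_gt m 0 with hm0 | hm0
    · have := mul_nonneg hA0 hδα.le
      linarith
    have hloc : ∀ r, R ≤ r → ∀ t ∈ Set.Icc r (r + ε * δ),
        |g (r • e) - g (t • e)| ≤ H / 4 * δ ^ α := by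
      intro r hr t ht
      rcases ht.1.eq_or_lt with rfl | hrt
      · rw [sub_self, abs_zero]
        positivity
      · calc _ ≤ H * (t - r) ^ α := hH' r t hr hrt
          _ ≤ H * (ε * δ) ^ α := by
            have := ht.2
            gcongr
            linarith
          _ = H * (ε ^ α * δ ^ α) := by rw [mul_rpow hε0.le hδ0.le]
          _ ≤ H * (1 / 4 * δ ^ α) := by gcongr
          _ = _ := by ring
    have hkey : m ≤ A * δ ^ α := (hgap g hrad hg hc e he R ρ δ m hR hρR hδ0 hm0.le (by
      intro t ht t' ht'
      have h1 := hloc ρ hρR t ht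
      have h2 := hloc (ρ + δ) (by linarith) t' ht'
      have h3 : D ≤ |g (ρ • e) - g (t • e)| + |g (t • e) - g (t' • e)| +
          |g ((ρ + δ) • e) - g (t' • e)| := by
        rw [abs_sub_comm (g ((ρ + δ) • e))]
        exact (abs_sub_le _ (g (t' • e)) _).trans
          (add_le_add_left (abs_sub_le _ (g (t • e)) _) _)
      linarith)).trans_eq (by rw [hA]; ring)
    linarith
  intro t t' ht htt'
  have h := le_two_mul_of_absorb hbdd habs ⟨⟨t, t'⟩, ht, htt'⟩
  simp only [φ] at h
  rw [div_le_iff₀ (rpow_pos_of_pos (sub_pos.2 htt') α)] at h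
  calc _ ≤ _ := h
    _ = _ := by rw [hA]; ring

theorem integral_norm_fderiv_ge_radial {d : ℕ} (hd : d ≠ 0) {g : EuclideanSpace ℝ (Fin d) → ℝ}
    (hrad : ∀ x y : EuclideanSpace ℝ (Fin d), ‖x‖ = ‖y‖ → g x = g y)
    (hg : ContDiff ℝ 1 g) (hc : HasCompactSupport g) {p : ℝ} (hp : 1 ≤ p)
    {e : EuclideanSpace ℝ (Fin d)} (he : ‖e‖ = 1) {R t t' : ℝ} (hR : 0 < R) (ht : R ≤ t) :
    volume.real (Metric.ball (0 : EuclideanSpace ℝ (Fin d)) 1) * R ^ (d - 1) *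
        ∫ r in Set.Ioc t t', |deriv (fun r : ℝ => g (r • e)) r| ^ p ≤
      ∫ x, ‖fderiv ℝ g x‖ ^ p := by
  have : Nonempty (Fin d) := ⟨⟨0, Nat.pos_of_ne_zero hd⟩⟩
  have hp0 : 0 < p := by linarith
  set f : ℝ → ℝ := fun r => g (r • e) with hf
  have hfC : ContDiff ℝ 1 f := hg.comp (contDiff_id.smul contDiff_const)
  have hfd : Continuous (deriv f) := hfC.continuous_deriv le_rfl
  have hfp : Continuous fun r => |deriv f r| ^ p := hfd.abs.rpow_const fun _ => .inr hp0.le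
  have hle : ∀ x : EuclideanSpace ℝ (Fin d), x ≠ 0 → |deriv f ‖x‖| ≤ ‖fderiv ℝ g x‖ := by
    intro x hx
    have hx0 : ‖x‖ ≠ 0 := norm_ne_zero_iff.2 hx
    set u := ‖x‖⁻¹ • x with hu
    have hun : ‖u‖ = 1 := by rw [hu, norm_smul, norm_inv, norm_norm, inv_mul_cancel₀ hx0]
    have hfu : f = fun r : ℝ => g (r • u) :=
      funext fun r => hrad _ _ (by rw [norm_smul, norm_smul, he, hun])
    have hxu : ‖x‖ • u = x := by rw [hu, smul_smul, mul_inv_cancel₀ hx0, one_smul]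
    have h1 : HasDerivAt (fun r : ℝ => r • u) u ‖x‖ := by
      simpa using (hasDerivAt_id ‖x‖).smul_const u
    have h2 : HasFDerivAt g (fderiv ℝ g x) (‖x‖ • u) := by
      rw [hxu]
      exact (hg.differentiable one_ne_zero x).hasFDerivAt
    have h3 : HasDerivAt f (fderiv ℝ g x u) ‖x‖ := by
      rw [hfu]
      exact h2.comp_hasDerivAt _ h1
    rw [h3.deriv]
    simpa [hun] using (fderiv ℝ g x).le_opNorm u
  have hIg : Integrable fun x => ‖fderiv ℝ g x‖ ^ p := by
    refine Continuous.integrable_of_hasCompactSupport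
      ((hg.continuous_fderiv one_ne_zero).norm.rpow_const fun _ => .inr hp0.le) ?_
    exact (hc.fderiv ℝ).norm.comp_left (g := fun r : ℝ => r ^ p) (zero_rpow hp0.ne')
  have hae : ∀ᵐ x : EuclideanSpace ℝ (Fin d), |deriv f ‖x‖| ^ p ≤ ‖fderiv ℝ g x‖ ^ p := by
    filter_upwards [compl_mem_ae_iff.2 (measure_singleton (0 : EuclideanSpace ℝ (Fin d)))]
      with x hx
    have := hle x hx
    gcongr
  have hIf : Integrable fun x : EuclideanSpace ℝ (Fin d) => |deriv f ‖x‖| ^ p := by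
    refine hIg.mono' (hfp.comp continuous_norm).aestronglyMeasurable ?_
    filter_upwards [hae] with x hx
    rwa [Real.norm_of_nonneg (by positivity)]
  have hIr := (integrable_fun_norm_addHaar (E := EuclideanSpace ℝ (Fin d)) volume
    (f := fun r => |deriv f r| ^ p)).1 hIf
  have hint := integral_fun_norm_addHaar (E := EuclideanSpace ℝ (Fin d)) volume
    (fun r => |deriv f r| ^ p)
  simp only [finrank_euclideanSpace_fin, smul_eq_mul, nsmul_eq_mul] at hIr hint
  have hd1 : (1 : ℝ) ≤ d := by exact_mod_cast Nat.one_le_iff_ne_zero.2 hd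
  have hsub : Set.Ioc t t' ⊆ Set.Ioi 0 := fun r hr => hR.trans_le (ht.trans hr.1.le)
  have hrad_le : R ^ (d - 1) * ∫ r in Set.Ioc t t', |deriv f r| ^ p ≤
      ∫ r in Set.Ioi (0 : ℝ), r ^ (d - 1) * |deriv f r| ^ p := by
    rw [← integral_const_mul]
    calc _ ≤ ∫ r in Set.Ioc t t', r ^ (d - 1) * |deriv f r| ^ p := by
          refine setIntegral_mono_on ((hfp.integrableOn_Ioc).const_mul _)
            (hIr.mono_set hsub) measurableSet_Ioc fun r hr => ?_
          have := ht.trans hr.1.le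
          gcongr
      _ ≤ _ := by
          refine setIntegral_mono_set hIr ?_ hsub.eventuallyLE
          filter_upwards [self_mem_ae_restrict measurableSet_Ioi] with r hr
          have : 0 < r := hr
          simp only [Pi.zero_apply]
          positivity
  set ω := volume.real (Metric.ball (0 : EuclideanSpace ℝ (Fin d)) 1) with hω
  have hω0 : 0 ≤ ω := measureReal_nonneg
  set J := ∫ r in Set.Ioc t t', |deriv f r| ^ p with hJ
  have hJ0 : 0 ≤ J := integral_nonneg fun r => by positivity
  calc ω * R ^ (d - 1) * J = 1 * (ω * (R ^ (d - 1) * J)) := by ring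
    _ ≤ d * (ω * ∫ r in Set.Ioi (0 : ℝ), r ^ (d - 1) * |deriv f r| ^ p) := by gcongr
    _ = ∫ x : EuclideanSpace ℝ (Fin d), |deriv f ‖x‖| ^ p := by rw [hint]
    _ ≤ _ := integral_mono_ae hIf hIg hae

theorem abs_sub_le_rpow_mul_integral_deriv {f : ℝ → ℝ} (hf : ContDiff ℝ 1 f) {p : ℝ} (hp : 1 < p)
    {t t' : ℝ} (htt' : t < t') :
    |f t - f t'| ≤ (t' - t) ^ (1 - 1 / p) * (∫ r in Set.Ioc t t', |deriv f r| ^ p) ^ (1 / p) := by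
  have hfd : Continuous (deriv f) := hf.continuous_deriv le_rfl
  have hpq := Real.HolderConjugate.conjExponent hp
  have hq : 1 / p.conjExponent = 1 - 1 / p := by
    have := hpq.inv_add_inv_eq_one
    simp only [one_div]
    linarith
  obtain ⟨B, hB⟩ := isCompact_Icc.exists_bound_of_continuousOn (s := Set.Icc t t')
    hfd.abs.continuousOn
  have hmem : MemLp (fun r => |deriv f r|) (ENNReal.ofReal p) (volume.restrict (Set.Ioc t t')) :=
    .of_bound hfd.abs.aestronglyMeasurable B
      (ae_restrict_of_forall_mem measurableSet_Ioc fun r hr => hB r (Set.Ioc_subset_Icc_self hr))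
  have h := integral_mul_le_Lp_mul_Lq_of_nonneg hpq (μ := volume.restrict (Set.Ioc t t'))
    (f := fun r => |deriv f r|) (g := fun _ => 1) (.of_forall fun _ => abs_nonneg _)
    (.of_forall fun _ => zero_le_one) hmem (memLp_const 1)
  simp only [mul_one, one_rpow, integral_const, smul_eq_mul, measureReal_restrict_apply_univ,
    Real.volume_real_Ioc_of_le htt'.le, hq] at h
  rw [abs_sub_comm, ← intervalIntegral.integral_deriv_eq_sub
    (fun r _ => hf.differentiable one_ne_zero r) (hfd.intervalIntegrable _ _),
    intervalIntegral.integral_of_le htt'.le, mul_comm]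
  exact abs_integral_le_integral_abs.trans h

theorem radial_holder_gradient {d : ℕ} (hd : d ≠ 0) {p : ℝ} (hp : 1 < p) :
    ∃ C > 0, ∀ g : EuclideanSpace ℝ (Fin d) → ℝ,
      (∀ x y : EuclideanSpace ℝ (Fin d), ‖x‖ = ‖y‖ → g x = g y) →
      ContDiff ℝ 1 g → HasCompactSupport g → ∀ e : EuclideanSpace ℝ (Fin d), ‖e‖ = 1 →
      ∀ R > 0, ∀ t t' : ℝ, R ≤ t → t < t' → |g (t • e) - g (t' • e)| ≤
        C * R ^ (-(((d : ℝ) - 1) / p)) * (t' - t) ^ (1 - 1 / p) * sobolevSemi d 1 p g := by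
  have hp0 : 0 < p := by linarith
  set ω := volume.real (Metric.ball (0 : EuclideanSpace ℝ (Fin d)) 1) with hω
  have hω0 : 0 < ω :=
    ENNReal.toReal_pos (Metric.measure_ball_pos _ _ one_pos).ne' measure_ball_lt_top.ne
  refine ⟨(ω⁻¹) ^ (1 / p), by positivity, fun g hrad hg hc e he R hR t t' ht htt' => ?_⟩
  have hfC : ContDiff ℝ 1 fun r : ℝ => g (r • e) := hg.comp (contDiff_id.smul contDiff_const)
  have h1 := abs_sub_le_rpow_mul_integral_deriv hfC hp htt'
  have h2 := integral_norm_fderiv_ge_radial hd hrad hg hc hp.le he hR ht (t' := t')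
  rw [← hω] at h2
  set J := ∫ r in Set.Ioc t t', |deriv (fun r : ℝ => g (r • e)) r| ^ p
  have hJ0 : 0 ≤ J := integral_nonneg fun r => by positivity
  have hcast : ((d - 1 : ℕ) : ℝ) = d - 1 := by
    rw [Nat.cast_sub (Nat.one_le_iff_ne_zero.2 hd)]; simp
  rw [sobolevSemi, if_pos rfl]
  set G := ∫ x, ‖fderiv ℝ g x‖ ^ p
  have hG0 : 0 ≤ G := integral_nonneg fun r => by positivity
  have h3 : J ≤ ω⁻¹ * R ^ (-((d : ℝ) - 1)) * G := by
    rw [rpow_neg hR.le, ← hcast, rpow_natCast, ← mul_inv, inv_mul_eq_div,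
      le_div_iff₀ (by positivity), mul_comm]
    exact h2
  have htt : 0 < t' - t := sub_pos.2 htt'
  calc _ ≤ _ := h1
    _ ≤ (t' - t) ^ (1 - 1 / p) * (ω⁻¹ * R ^ (-((d : ℝ) - 1)) * G) ^ (1 / p) := by gcongr
    _ = _ := by
      have e1 : -((d : ℝ) - 1) * (1 / p) = -(((d : ℝ) - 1) / p) := by ring
      rw [mul_rpow (by positivity) hG0, mul_rpow (by positivity) (by positivity),
        ← rpow_mul hR.le, e1]
      ring

theorem exists_radial_decay_const {d s p : ℝ} (hp : 1 ≤ p) (hspd : s * p < d) :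
    ∃ C > 0, ∀ (f : ℝ → ℝ) (A T B : ℝ), (∀ r, |f r| ≤ B) → (∀ r, T ≤ r → f r = 0) →
      (∀ R > 0, ∀ t t' : ℝ, R ≤ t → t < t' →
        |f t - f t'| ≤ A * R ^ (-((d - 1) / p)) * (t' - t) ^ (s - 1 / p)) →
      ∀ r > 0, |f r| ≤ C * A * r ^ (-((d - s * p) / p)) := by
  have hp0 : 0 < p := by linarith
  set a := (d - s * p) / p with ha
  have ha0 : 0 < a := div_pos (sub_pos.2 hspd) hp0
  set l := (3 : ℝ) ^ (1 / a) with hl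
  have hl1 : 1 < l := one_lt_rpow (by norm_num) (by positivity)
  have hl0 : 0 < l := by linarith
  have hla : l ^ a = 3 := by
    rw [hl, ← rpow_mul (by norm_num), one_div_mul_cancel ha0.ne', rpow_one]
  have hl1' : 0 < l - 1 := by linarith
  refine ⟨2 * (l - 1) ^ (s - 1 / p), by positivity, fun f A T B hB hT hf r hr => ?_⟩
  have hB0 : 0 ≤ B := (abs_nonneg _).trans (hB 0)
  let φ : Set.Ioi (0 : ℝ) → ℝ := fun r => |f r| * (r : ℝ) ^ a
  have hbdd : BddAbove (Set.range φ) := by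
    refine ⟨B * |T| ^ a, ?_⟩
    rintro _ ⟨⟨t, ht⟩, rfl⟩
    have ht : 0 < t := ht
    simp only [φ]
    rcases le_total T t with h | h
    · rw [hT t h, abs_zero, zero_mul]
      positivity
    · have := hB t
      have := h.trans (le_abs_self T)
      gcongr
  have habs : ∀ H, (∀ i, φ i ≤ H) → ∀ i, φ i ≤ H / 2 + A * (l - 1) ^ (s - 1 / p) := by
    rintro H hH ⟨t, ht⟩
    have ht : 0 < t := ht
    have hH0 : 0 ≤ H := le_trans (by simp only [φ]; positivity) (hH ⟨t, ht⟩)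
    have h1 := hH ⟨l * t, mul_pos hl0 ht⟩
    simp only [φ] at h1 ⊢
    rw [mul_rpow hl0.le ht.le, hla] at h1
    have h2 := hf t ht t (l * t) le_rfl (by nlinarith)
    have h3 : |f t| ≤ |f (l * t)| + |f t - f (l * t)| := by
      have := abs_sub_abs_le_abs_sub (f t) (f (l * t))
      linarith
    have hta : 0 < t ^ a := rpow_pos_of_pos ht a
    have h4 : A * t ^ (-((d - 1) / p)) * (l * t - t) ^ (s - 1 / p) * t ^ a =
        A * (l - 1) ^ (s - 1 / p) := by
      have e1 : l * t - t = (l - 1) * t := by ring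
      have e2 : t ^ (-((d - 1) / p)) * t ^ (s - 1 / p) * t ^ a = 1 := by
        rw [← rpow_add ht, ← rpow_add ht, ← rpow_zero t]
        congr 1
        rw [ha]
        field_simp
        ring
      rw [e1, mul_rpow hl1'.le ht.le]
      linear_combination A * (l - 1) ^ (s - 1 / p) * e2
    have h5 := mul_le_mul_of_nonneg_right (h3.trans (add_le_add_right h2 _)) hta.le
    rw [add_mul, h4] at h5
    nlinarith
  have h := le_two_mul_of_absorb hbdd habs ⟨r, hr⟩
  simp only [φ] at h
  rw [rpow_neg hr.le, ← div_eq_mul_inv, le_div_iff₀ (rpow_pos_of_pos hr a)]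
  linarith

theorem stmt11 (d : ℕ) (hd : 2 ≤ d) (s p : ℝ)
    (hs0 : 0 < s) (hs1 : s ≤ 1) (hp1 : 1 ≤ p) (hsp1 : 1 < s * p) (hspd : s * p < d) :
    ∃ C > 0, ∀ g : EuclideanSpace ℝ (Fin d) → ℝ,
      (∀ x y : EuclideanSpace ℝ (Fin d), ‖x‖ = ‖y‖ → g x = g y) →
      ContDiff ℝ 1 g → HasCompactSupport g →
      ∀ x : EuclideanSpace ℝ (Fin d), x ≠ 0 →
        |g x| ≤ C * ‖x‖ ^ (-(((d : ℝ) - s * p) / p)) * sobolevSemi d s p g := by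
  have hd0 : d ≠ 0 := by lia
  obtain ⟨C₁, hC₁, hH⟩ : ∃ C > 0, ∀ g : EuclideanSpace ℝ (Fin d) → ℝ,
      (∀ x y : EuclideanSpace ℝ (Fin d), ‖x‖ = ‖y‖ → g x = g y) →
      ContDiff ℝ 1 g → HasCompactSupport g → ∀ e : EuclideanSpace ℝ (Fin d), ‖e‖ = 1 →
      ∀ R > 0, ∀ t t' : ℝ, R ≤ t → t < t' → |g (t • e) - g (t' • e)| ≤
        C * R ^ (-(((d : ℝ) - 1) / p)) * (t' - t) ^ (s - 1 / p) * sobolevSemi d s p g := by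
    rcases hs1.eq_or_lt with rfl | hs
    · exact radial_holder_gradient hd0 (by linarith)
    · exact radial_holder_fractional hd0 hs0 hs hp1 hsp1
  obtain ⟨C₂, hC₂, hD⟩ := exists_radial_decay_const hp1 hspd
  refine ⟨C₂ * C₁, by positivity, fun g hrad hg hc x hx => ?_⟩
  have hx0 : 0 < ‖x‖ := norm_pos_iff.2 hx
  set e := ‖x‖⁻¹ • x with he
  have hen : ‖e‖ = 1 := by rw [he, norm_smul, norm_inv, norm_norm, inv_mul_cancel₀ hx0.ne']
  have hxe : ‖x‖ • e = x := by rw [he, smul_smul, mul_inv_cancel₀ hx0.ne', one_smul]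
  obtain ⟨B, hB⟩ := hc.exists_bound_of_continuous hg.continuous
  obtain ⟨T, hT0, hT⟩ := hc.exists_pos_le_norm
  have h := hD (fun r => g (r • e)) (C₁ * sobolevSemi d s p g) T B (fun r => hB _)
    (fun r hr => hT _ (by
      rw [norm_smul, hen, mul_one]
      exact hr.trans (le_abs_self r)))
    (fun R hR t t' ht htt' => (hH g hrad hg hc e hen R hR t t' ht htt').trans_eq (by ring))
    ‖x‖ hx0
  simp only [hxe] at h
  exact h.trans_eq (by ring)
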